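/- arXiv:2310.08823 — 3 statements merged into one kernel-verified Lean document; each statement's English description precedes it below -/
import Mathlib

section
/- Let π_i and π_j be two stationary policies for a finite MDP with reward bounded by r_max and discount factor γ ∈ [0,1). Then the absolute difference of their expected discounted returns satisfies |J(π_i) − J(π_j)| ≤ (2 r_max / (1 − γ)²) · max_{s ∈ S} D_TV(π_i(·|s), π_j(·|s)). -/
theorem avg_bound_aux {X : Type*} [Fintype X] (w f : X → ℝ) (C : ℝ)
    (h0 : ∀ x, 0 ≤ w x) (h1 : ∑ x, w x = 1) (hf : ∀ x, |f x| ≤ C) :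
    |∑ x, w x * f x| ≤ C := by
  calc |∑ x, w x * f x| ≤ ∑ x, |w x * f x| := Finset.abs_sum_le_sum_abs _ _
    _ ≤ ∑ x, w x * C := by
        apply Finset.sum_le_sum
        intro x _
        rw [abs_mul, abs_of_nonneg (h0 x)]
        exact mul_le_mul_of_nonneg_left (hf x) (h0 x)
    _ = C := by rw [← Finset.sum_mul, h1, one_mul]

/-- For two stationary policies `πi`, `πj` of a finite MDP with rewards
bounded by `rmax` and discount factor `γ ∈ [0,1)`, the difference of expected
discounted returns `J(πi) = Σ_s μ s * V^{πi} s` satisfies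
`|J(πi) − J(πj)| ≤ (2 rmax / (1 − γ)²) · max_s D_TV(πi(·|s), πj(·|s))`. -/
theorem return_difference_bounded_by_policy_tv
    {S A : Type*} [Fintype S] [Fintype A] [Nonempty S] [Nonempty A]
    (P : S → A → S → ℝ)
    (hP0 : ∀ s a s', 0 ≤ P s a s') (hP1 : ∀ s a, ∑ s', P s a s' = 1)
    (r : S → A → ℝ) (rmax : ℝ) (hr : ∀ s a, |r s a| ≤ rmax)
    (γ : ℝ) (hγ0 : 0 ≤ γ) (hγ1 : γ < 1)
    (πi πj : S → A → ℝ)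
    (hπi0 : ∀ s a, 0 ≤ πi s a) (hπi1 : ∀ s, ∑ a, πi s a = 1)
    (hπj0 : ∀ s a, 0 ≤ πj s a) (hπj1 : ∀ s, ∑ a, πj s a = 1)
    (Vi Vj : S → ℝ)
    (hVi : ∀ s, Vi s = ∑ a, πi s a * (r s a + γ * ∑ s', P s a s' * Vi s'))
    (hVj : ∀ s, Vj s = ∑ a, πj s a * (r s a + γ * ∑ s', P s a s' * Vj s'))
    (μ : S → ℝ) (hμ0 : ∀ s, 0 ≤ μ s) (hμ1 : ∑ s, μ s = 1) :
    |(∑ s, μ s * Vi s) - ∑ s, μ s * Vj s| ≤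
      (2 * rmax / (1 - γ) ^ 2) *
        Finset.univ.sup' Finset.univ_nonempty
          (fun s => (1 / 2 : ℝ) * ∑ a, |πi s a - πj s a|) := by
  have hg : 0 < 1 - γ := by linarith
  set T := Finset.univ.sup' Finset.univ_nonempty
          (fun s => (1 / 2 : ℝ) * ∑ a, |πi s a - πj s a|) with hT
  have hTs : ∀ s, (1 / 2 : ℝ) * ∑ a, |πi s a - πj s a| ≤ T := fun s =>
    Finset.le_sup' (fun s => (1 / 2 : ℝ) * ∑ a, |πi s a - πj s a|) (Finset.mem_univ s)
  obtain ⟨s0, hs0⟩ := Finite.exists_max (fun s => |Vj s|)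
  obtain ⟨s1, hs1⟩ := Finite.exists_max (fun s => |Vi s - Vj s|)
  have hQ : ∀ s a, |r s a + γ * ∑ s', P s a s' * Vj s'| ≤ rmax + γ * |Vj s0| := by
    intro s a
    have h1 := avg_bound_aux (P s a) Vj _ (hP0 s a) (hP1 s a) hs0
    refine (abs_add_le _ _).trans (add_le_add (hr s a) ?_)
    rw [abs_mul, abs_of_nonneg hγ0]
    exact mul_le_mul_of_nonneg_left h1 hγ0
  have hM : |Vj s0| ≤ rmax + γ * |Vj s0| := by
    have h := avg_bound_aux (πj s0) _ _ (hπj0 s0) (hπj1 s0) (hQ s0)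
    rwa [← hVj s0] at h
  have hK : rmax + γ * |Vj s0| ≤ rmax / (1 - γ) := by
    rw [le_div_iff₀ hg]
    nlinarith
  have hr0 : 0 ≤ rmax / (1 - γ) :=
    le_trans (le_trans (abs_nonneg _) hM) hK
  have hD : |Vi s1 - Vj s1| ≤ 2 * T * (rmax / (1 - γ)) + γ * |Vi s1 - Vj s1| := by
    have e : Vi s1 - Vj s1 =
        ∑ a, (πi s1 a - πj s1 a) * (r s1 a + γ * ∑ s', P s1 a s' * Vj s')
        + ∑ a, πi s1 a * (γ * ∑ s', P s1 a s' * (Vi s' - Vj s')) := by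
      conv_lhs => rw [hVi s1, hVj s1]
      rw [← Finset.sum_sub_distrib, ← Finset.sum_add_distrib]
      apply Finset.sum_congr rfl
      intro a _
      simp only [mul_sub, Finset.sum_sub_distrib]
      ring
    have b1 : |∑ a, (πi s1 a - πj s1 a) * (r s1 a + γ * ∑ s', P s1 a s' * Vj s')|
        ≤ 2 * T * (rmax / (1 - γ)) := by
      calc _ ≤ ∑ a, |(πi s1 a - πj s1 a) * (r s1 a + γ * ∑ s', P s1 a s' * Vj s')| :=
            Finset.abs_sum_le_sum_abs _ _
        _ ≤ ∑ a, |πi s1 a - πj s1 a| * (rmax / (1 - γ)) := by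
            apply Finset.sum_le_sum
            intro a _
            rw [abs_mul]
            exact mul_le_mul_of_nonneg_left ((hQ s1 a).trans hK) (abs_nonneg _)
        _ = (∑ a, |πi s1 a - πj s1 a|) * (rmax / (1 - γ)) := by rw [Finset.sum_mul]
        _ ≤ _ := by
            apply mul_le_mul_of_nonneg_right _ hr0
            linarith [hTs s1]
    have b2 : |∑ a, πi s1 a * (γ * ∑ s', P s1 a s' * (Vi s' - Vj s'))|
        ≤ γ * |Vi s1 - Vj s1| := by
      apply avg_bound_aux _ _ _ (hπi0 s1) (hπi1 s1)
      intro a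
      rw [abs_mul, abs_of_nonneg hγ0]
      exact mul_le_mul_of_nonneg_left
        (avg_bound_aux (P s1 a) _ _ (hP0 s1 a) (hP1 s1 a) hs1) hγ0
    calc |Vi s1 - Vj s1| = _ := congrArg abs e
      _ ≤ _ := abs_add_le _ _
      _ ≤ _ := add_le_add b1 b2
  have hF : |Vi s1 - Vj s1| ≤ (2 * rmax / (1 - γ) ^ 2) * T := by
    have h : |Vi s1 - Vj s1| ≤ (2 * T * (rmax / (1 - γ))) / (1 - γ) := by
      rw [le_div_iff₀ hg]
      linarith
    refine h.trans (le_of_eq ?_)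
    field_simp
  rw [← Finset.sum_sub_distrib]
  simp only [← mul_sub]
  exact (avg_bound_aux μ _ _ hμ0 hμ1 hs1).trans hF
end

section
/- For any two stationary policies π_i and π_j in a finite MDP with reward bounded by r_max, discount factor γ ∈ [0,1), and any initial state distribution μ, the expected value difference ΔV(s) = V^{π_i}(s) − V^{π_j}(s) satisfies (1 − γ) Σ_s μ(s) ΔV(s) ≤ (2 r_max / (1 − γ)) · max_{s ∈ S} D_TV(π_i(·|s), π_j(·|s)). -/
theorem evd_avg_le {X : Type*} [Fintype X] (w f : X → ℝ) (c : ℝ)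
    (h0 : ∀ x, 0 ≤ w x) (h1 : ∑ x, w x = 1) (hf : ∀ x, f x ≤ c) :
    ∑ x, w x * f x ≤ c := by
  calc ∑ x, w x * f x ≤ ∑ x, w x * c :=
        Finset.sum_le_sum fun x _ => mul_le_mul_of_nonneg_left (hf x) (h0 x)
    _ = c := by rw [← Finset.sum_mul, h1, one_mul]

theorem evd_abs_avg_le {X : Type*} [Fintype X] (w f : X → ℝ) (c : ℝ)
    (h0 : ∀ x, 0 ≤ w x) (h1 : ∑ x, w x = 1) (hf : ∀ x, |f x| ≤ c) :
    |∑ x, w x * f x| ≤ c := by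
  refine (Finset.abs_sum_le_sum_abs _ _).trans ?_
  simp only [abs_mul, abs_of_nonneg (h0 _)]
  exact evd_avg_le w _ c h0 h1 hf

/-- The expected value difference satisfies
`(1 − γ) Σ_s μ(s) (V^{πi}(s) − V^{πj}(s))
   ≤ (2 rmax / (1 − γ)) · max_s D_TV(πi(·|s), πj(·|s))`. -/
theorem expected_value_difference_bound
    {S A : Type*} [Fintype S] [Fintype A] [Nonempty S] [Nonempty A]
    (P : S → A → S → ℝ)
    (hP0 : ∀ s a s', 0 ≤ P s a s') (hP1 : ∀ s a, ∑ s', P s a s' = 1)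
    (r : S → A → ℝ) (rmax : ℝ) (hr : ∀ s a, |r s a| ≤ rmax)
    (γ : ℝ) (hγ0 : 0 ≤ γ) (hγ1 : γ < 1)
    (πi πj : S → A → ℝ)
    (hπi0 : ∀ s a, 0 ≤ πi s a) (hπi1 : ∀ s, ∑ a, πi s a = 1)
    (hπj0 : ∀ s a, 0 ≤ πj s a) (hπj1 : ∀ s, ∑ a, πj s a = 1)
    (Vi Vj : S → ℝ)
    (hVi : ∀ s, Vi s = ∑ a, πi s a * (r s a + γ * ∑ s', P s a s' * Vi s'))
    (hVj : ∀ s, Vj s = ∑ a, πj s a * (r s a + γ * ∑ s', P s a s' * Vj s'))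
    (μ : S → ℝ) (hμ0 : ∀ s, 0 ≤ μ s) (hμ1 : ∑ s, μ s = 1) :
    (1 - γ) * ∑ s, μ s * (Vi s - Vj s) ≤
      (2 * rmax / (1 - γ)) *
        Finset.univ.sup' Finset.univ_nonempty
          (fun s => (1 / 2 : ℝ) * ∑ a, |πi s a - πj s a|) := by
  have hg : 0 < 1 - γ := by linarith
  set T := Finset.univ.sup' Finset.univ_nonempty
          (fun s => (1 / 2 : ℝ) * ∑ a, |πi s a - πj s a|) with hT
  have hTs : ∀ s, (1 / 2 : ℝ) * ∑ a, |πi s a - πj s a| ≤ T := fun s =>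
    Finset.le_sup' (fun s => (1 / 2 : ℝ) * ∑ a, |πi s a - πj s a|) (Finset.mem_univ s)
  have hq : ∀ c, (∀ s, |Vj s| ≤ c) →
      ∀ s a, |r s a + γ * ∑ s', P s a s' * Vj s'| ≤ rmax + γ * c := by
    intro c hc s a
    refine (abs_add_le _ _).trans (add_le_add (hr s a) ?_)
    rw [abs_mul, abs_of_nonneg hγ0]
    exact mul_le_mul_of_nonneg_left
      (evd_abs_avg_le _ _ c (hP0 s a) (hP1 s a) hc) hγ0
  obtain ⟨s0, hs0⟩ := Finite.exists_max (fun s => |Vj s|)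
  have hb : |Vj s0| ≤ rmax + γ * |Vj s0| := by
    have h := evd_abs_avg_le (πj s0) _ _ (hπj0 s0) (hπj1 s0) (hq _ hs0 s0)
    rwa [← hVj s0] at h
  set B := rmax / (1 - γ) with hB
  have hBe : rmax + γ * B = B := by
    rw [hB]; field_simp; ring
  have hVB : ∀ s, |Vj s| ≤ B := fun s => (hs0 s).trans (by
    rw [hB, le_div_iff₀ hg]; linarith)
  have hB0 : 0 ≤ B := (abs_nonneg _).trans (hVB s0)
  have hQ := hq B hVB
  rw [hBe] at hQ
  obtain ⟨s1, hs1⟩ := Finite.exists_max (fun s => Vi s - Vj s)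
  have hdec : Vi s1 - Vj s1 =
      ∑ a, (πi s1 a - πj s1 a) * (r s1 a + γ * ∑ s', P s1 a s' * Vj s')
      + γ * ∑ a, πi s1 a * ∑ s', P s1 a s' * (Vi s' - Vj s') := by
    conv_lhs => rw [hVi s1, hVj s1]
    rw [Finset.mul_sum, ← Finset.sum_sub_distrib, ← Finset.sum_add_distrib]
    refine Finset.sum_congr rfl fun a _ => ?_
    simp only [mul_sub (P _ _ _), Finset.sum_sub_distrib]
    ring
  have h1 : ∑ a, (πi s1 a - πj s1 a) * (r s1 a + γ * ∑ s', P s1 a s' * Vj s')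
      ≤ (∑ a, |πi s1 a - πj s1 a|) * B := by
    rw [Finset.sum_mul]
    refine Finset.sum_le_sum fun a _ => (le_abs_self _).trans ?_
    rw [abs_mul]
    exact mul_le_mul_of_nonneg_left (hQ s1 a) (abs_nonneg _)
  have h2 : ∑ a, πi s1 a * ∑ s', P s1 a s' * (Vi s' - Vj s') ≤ Vi s1 - Vj s1 :=
    evd_avg_le _ _ _ (hπi0 s1) (hπi1 s1) fun a =>
      evd_avg_le _ _ _ (hP0 s1 a) (hP1 s1 a) hs1
  have h3 := mul_le_mul_of_nonneg_left h2 hγ0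
  have h4 := mul_le_mul_of_nonneg_right (hTs s1) hB0
  have h5 : ∑ s, μ s * (Vi s - Vj s) ≤ Vi s1 - Vj s1 := evd_avg_le _ _ _ hμ0 hμ1 hs1
  have h6 := mul_le_mul_of_nonneg_left h5 hg.le
  have h7 : 2 * rmax / (1 - γ) * T = 2 * (T * B) := by rw [hB]; ring
  rw [h7]
  linarith
end

section
/- Let π_i and π_j be two stationary policies in a finite MDP with reward bounded by r_max and discount factor γ ∈ [0,1), let μ be an initial state distribution, and let d_{π_i} be the discounted state visitation distribution of π_i. Writing ΔV(s) = V^{π_i}(s) − V^{π_j}(s), δ_1(s) = 2 r_max D_TV(π_i(·|s), π_j(·|s)) and δ_2(s) = (2 r_max / (1 − γ)) D_TV(π_i(·|s), π_j(·|s)), the following inequality holds: Σ_s d_{π_i}(s) ΔV(s) ≤ max_{s}[δ_1(s) + γ δ_2(s)] + Σ_{s'} [d_{π_i}(s') − (1 − γ) μ(s')] ΔV(s'). -/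
/-- With `ΔV(s) = V^{πi}(s) − V^{πj}(s)`,
`δ₁(s) = 2 rmax D_TV(πi(·|s), πj(·|s))` and
`δ₂(s) = (2 rmax / (1 − γ)) D_TV(πi(·|s), πj(·|s))`, and `d` the discounted state
visitation distribution of `πi`, we have
`Σ_s d(s) ΔV(s) ≤ max_s [δ₁(s) + γ δ₂(s)] + Σ_{s'} (d(s') − (1 − γ) μ(s')) ΔV(s')`. -/
theorem visitation_weighted_value_difference_bound
    {S A : Type*} [Fintype S] [Fintype A] [Nonempty S] [Nonempty A]
    (P : S → A → S → ℝ)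
    (hP0 : ∀ s a s', 0 ≤ P s a s') (hP1 : ∀ s a, ∑ s', P s a s' = 1)
    (r : S → A → ℝ) (rmax : ℝ) (hr : ∀ s a, |r s a| ≤ rmax)
    (γ : ℝ) (hγ0 : 0 ≤ γ) (hγ1 : γ < 1)
    (πi πj : S → A → ℝ)
    (hπi0 : ∀ s a, 0 ≤ πi s a) (hπi1 : ∀ s, ∑ a, πi s a = 1)
    (hπj0 : ∀ s a, 0 ≤ πj s a) (hπj1 : ∀ s, ∑ a, πj s a = 1)
    (Vi Vj : S → ℝ)
    (hVi : ∀ s, Vi s = ∑ a, πi s a * (r s a + γ * ∑ s', P s a s' * Vi s'))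
    (hVj : ∀ s, Vj s = ∑ a, πj s a * (r s a + γ * ∑ s', P s a s' * Vj s'))
    (μ : S → ℝ) (hμ0 : ∀ s, 0 ≤ μ s) (hμ1 : ∑ s, μ s = 1)
    -- `d` is the discounted state visitation distribution of `πi`
    (d : S → ℝ) (hd0 : ∀ s, 0 ≤ d s) (hd1 : ∑ s, d s = 1)
    (hd : ∀ s, d s = (1 - γ) * μ s + γ * ∑ s', ∑ a, d s' * πi s' a * P s' a s) :
    ∑ s, d s * (Vi s - Vj s) ≤
      Finset.univ.sup' Finset.univ_nonempty
        (fun s =>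
          2 * rmax * ((1 / 2 : ℝ) * ∑ a, |πi s a - πj s a|) +
            γ * (2 * rmax / (1 - γ) * ((1 / 2 : ℝ) * ∑ a, |πi s a - πj s a|))) +
      ∑ s', (d s' - (1 - γ) * μ s') * (Vi s' - Vj s') := by
  have h1 : 0 < 1 - γ := by linarith
  -- averaging bound
  have hPav : ∀ (V : S → ℝ) (M : ℝ), (∀ s, |V s| ≤ M) → ∀ s a, |∑ s', P s a s' * V s'| ≤ M := by
    intro V M hM s a
    calc |∑ s', P s a s' * V s'| ≤ ∑ s', |P s a s' * V s'| := Finset.abs_sum_le_sum_abs _ _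
      _ ≤ ∑ s', P s a s' * M := by
          apply Finset.sum_le_sum
          intro s' _
          rw [abs_mul, abs_of_nonneg (hP0 s a s')]
          exact mul_le_mul_of_nonneg_left (hM s') (hP0 s a s')
      _ = M := by rw [← Finset.sum_mul, hP1, one_mul]
  have hQ : ∀ (V : S → ℝ) (M : ℝ), (∀ s, |V s| ≤ M) →
      ∀ s a, |r s a + γ * ∑ s', P s a s' * V s'| ≤ rmax + γ * M := by
    intro V M hM s a
    refine (abs_add_le _ _).trans (add_le_add (hr s a) ?_)
    rw [abs_mul, abs_of_nonneg hγ0]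
    exact mul_le_mul_of_nonneg_left (hPav V M hM s a) hγ0
  -- value bound
  have hVb : ∀ s, |Vj s| ≤ rmax / (1 - γ) := by
    obtain ⟨s0, hs0⟩ := Finite.exists_max (fun s => |Vj s|)
    have hle : |Vj s0| ≤ rmax + γ * |Vj s0| := by
      calc |Vj s0| = |∑ a, πj s0 a * (r s0 a + γ * ∑ s', P s0 a s' * Vj s')| := by
            rw [← hVj s0]
        _ ≤ ∑ a, |πj s0 a * (r s0 a + γ * ∑ s', P s0 a s' * Vj s')| :=
            Finset.abs_sum_le_sum_abs _ _
        _ ≤ ∑ a, πj s0 a * (rmax + γ * |Vj s0|) := by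
            apply Finset.sum_le_sum
            intro a _
            rw [abs_mul, abs_of_nonneg (hπj0 s0 a)]
            exact mul_le_mul_of_nonneg_left (hQ Vj _ hs0 s0 a) (hπj0 s0 a)
        _ = _ := by rw [← Finset.sum_mul, hπj1, one_mul]
    intro s
    refine (hs0 s).trans ?_
    rw [le_div_iff₀ h1]
    linarith
  -- one-step decomposition
  have hdec : ∀ s, Vi s - Vj s =
      ∑ a, (πi s a - πj s a) * (r s a + γ * ∑ s', P s a s' * Vj s') +
        γ * ∑ a, ∑ s', πi s a * P s a s' * (Vi s' - Vj s') := by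
    intro s
    rw [hVi s, hVj s, Finset.mul_sum, ← Finset.sum_sub_distrib, ← Finset.sum_add_distrib]
    apply Finset.sum_congr rfl
    intro a _
    have : ∑ s', πi s a * P s a s' * (Vi s' - Vj s') =
        πi s a * (∑ s', P s a s' * Vi s' - ∑ s', P s a s' * Vj s') := by
      rw [← Finset.sum_sub_distrib, Finset.mul_sum]
      exact Finset.sum_congr rfl fun s' _ => by ring
    rw [this]
    ring
  have hflow : ∑ s', (d s' - (1 - γ) * μ s') * (Vi s' - Vj s') =
      ∑ s, d s * (γ * ∑ a, ∑ s', πi s a * P s a s' * (Vi s' - Vj s')) := by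
    have e1 : ∀ s', (d s' - (1 - γ) * μ s') * (Vi s' - Vj s') =
        ∑ s, ∑ a, γ * (d s * πi s a * P s a s') * (Vi s' - Vj s') := by
      intro s'
      have : d s' - (1 - γ) * μ s' = γ * ∑ s, ∑ a, d s * πi s a * P s a s' := by
        linarith [hd s']
      rw [this]
      simp only [Finset.mul_sum, Finset.sum_mul]
    simp only [e1]
    rw [Finset.sum_comm]
    apply Finset.sum_congr rfl
    intro s _
    rw [Finset.sum_comm]
    simp only [Finset.mul_sum]
    exact Finset.sum_congr rfl fun a _ => Finset.sum_congr rfl fun s' _ => by ring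
  rw [hflow]
  set F : S → ℝ := fun s =>
          2 * rmax * ((1 / 2 : ℝ) * ∑ a, |πi s a - πj s a|) +
            γ * (2 * rmax / (1 - γ) * ((1 / 2 : ℝ) * ∑ a, |πi s a - πj s a|)) with hF
  have hg : ∀ s, ∑ a, (πi s a - πj s a) * (r s a + γ * ∑ s', P s a s' * Vj s') ≤
      Finset.univ.sup' Finset.univ_nonempty F := by
    intro s
    refine le_trans ?_ (Finset.le_sup' F (Finset.mem_univ s))
    calc _ ≤ ∑ a, |πi s a - πj s a| * (rmax + γ * (rmax / (1 - γ))) := by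
          apply Finset.sum_le_sum
          intro a _
          refine (le_abs_self _).trans ?_
          rw [abs_mul]
          exact mul_le_mul_of_nonneg_left (hQ Vj _ hVb s a) (abs_nonneg _)
      _ = F s := by
          rw [← Finset.sum_mul, hF]
          ring
  calc ∑ s, d s * (Vi s - Vj s)
      = ∑ s, d s * (∑ a, (πi s a - πj s a) * (r s a + γ * ∑ s', P s a s' * Vj s')) +
        ∑ s, d s * (γ * ∑ a, ∑ s', πi s a * P s a s' * (Vi s' - Vj s')) := by
        rw [← Finset.sum_add_distrib]
        apply Finset.sum_congr rfl
        intro s _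
        rw [← mul_add, ← hdec s]
    _ ≤ _ := by
        gcongr
        calc _ ≤ ∑ s, d s * Finset.univ.sup' Finset.univ_nonempty F :=
              Finset.sum_le_sum fun s _ => mul_le_mul_of_nonneg_left (hg s) (hd0 s)
          _ = _ := by rw [← Finset.sum_mul, hd1, one_mul]
end
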